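/- (Lemma G.1, Stability.) There exists a universal constant C > 0 such that for every K ≥ 2 and all vectors P, Q ∈ ℝ^K where P has a unique maximizer i*(P) and i*(P) is not a maximizer of Q, the stability functional satisfies S(Q,P) = H₁(P) · Σ_{i=1}^K (Q_i − P_i)²/D_i(Q) ≥ C. -/

import Mathlib

/-!
Write `q_i` for the gaps of `Q`, `a` for the best index of `P`, `b` for a maximizer of `Q`,
`e_i = P_i - Q_i`, and `s = max (P_a - Q*) q_a > 0`.  Put `r_i = q_i + s`, `w_i = r_i⁻²`,
`H = ∑ w_i` and `T = ∑ e_i² / D_i`.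

* The map `x ↦ x / (q_j + x)` is increasing, so `0 < D_i ≤ 4 r_i² H` for every `i`, and
  `D_a, D_b ≤ 4 s² H` (`Dbase_le`, `Dbase_le_of_gapQ_le`, `exists_Dfun_eq_Dbase`).
* Since `P_b ≤ P_a`, moving from `Q` to `P` costs `e_a² + e_b² ≥ s² / 2`, hence `1 ≤ 8 H T`.
* The gaps `δ_j = P_a - P_j` satisfy `δ_j ≤ r_j + |e_j|`, hence (using `w_j ≤ H`)
  `∑_{j ≠ a} w_j² δ_j² ≤ 2 H + 8 H² T ≤ 24 H² T`.
* Cauchy–Schwarz gives `(∑_{j ≠ a} w_j)² ≤ (∑_{j ≠ a} w_j² δ_j²) H₁(P) ≤ 24 H² T H₁(P)`, while the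
  left side is at least `H² / 4` because `w_a ≤ w_b`.  So `S(Q, P) = H₁(P) T ≥ 1 / 96`.
-/

open Finset

/-- The largest entry of `Q` (the index set `Fin K` is nonempty in all statements below). -/
noncomputable def Qmax {K : ℕ} (Q : Fin K → ℝ) : ℝ := ⨆ j, Q j

/-- Index `i` is a maximizer of the vector `Q`. -/
def isMax {K : ℕ} (Q : Fin K → ℝ) (i : Fin K) : Prop := ∀ j, Q j ≤ Q i

/-- Index `i` is the unique maximizer of the vector `P`. -/
def uniqueMax {K : ℕ} (P : Fin K → ℝ) (i : Fin K) : Prop :=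
  isMax P i ∧ ∀ j, isMax P j → j = i

/-- The gap `Δ_i^Q = Q* - Q_i`. -/
noncomputable def gapQ {K : ℕ} (Q : Fin K → ℝ) (i : Fin K) : ℝ := Qmax Q - Q i

/-- `D_i(Q)` for a non-maximizing index `i`:
`(2Δ_i^Q)² · Σ_{j≠i} (Δ_j^Q + Δ_i^Q)⁻²`. -/
noncomputable def Dbase {K : ℕ} (Q : Fin K → ℝ) (i : Fin K) : ℝ :=
  (2 * gapQ Q i) ^ 2 * ∑ j ∈ univ.erase i, ((gapQ Q j + gapQ Q i) ^ 2)⁻¹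

open Classical in
/-- `D_i(Q)`: for a maximizer `i` it is the minimum of `D_{i'}(Q)` over non-maximizers `i'`. -/
noncomputable def Dfun {K : ℕ} (Q : Fin K → ℝ) (i : Fin K) : ℝ :=
  if isMax Q i then sInf {x : ℝ | ∃ i', ¬ isMax Q i' ∧ x = Dbase Q i'} else Dbase Q i

/-- The normalization factor `Z(Q) = Σ_i 1/D_i(Q)`. -/
noncomputable def Zfun {K : ℕ} (Q : Fin K → ℝ) : ℝ := ∑ i, (Dfun Q i)⁻¹

open Classical in
/-- The complexity `H₁(P) = Σ_{i ≠ i*(P)} ((max_j P_j) - P_i)⁻²`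
(for `P` with a unique maximizer, the non-maximizing indices are exactly those `≠ i*(P)`). -/
noncomputable def H1 {K : ℕ} (P : Fin K → ℝ) : ℝ :=
  ∑ i ∈ univ.filter (fun i => ¬ isMax P i), ((Qmax P - P i) ^ 2)⁻¹

/-- The stability functional `S(Q,P) = H₁(P) · Σ_i (Q_i - P_i)² / D_i(Q)`. -/
noncomputable def Sfun {K : ℕ} (Q P : Fin K → ℝ) : ℝ :=
  H1 P * ∑ i, (Q i - P i) ^ 2 / Dfun Q i

lemma le_Qmax {K : ℕ} (Q : Fin K → ℝ) (i : Fin K) : Q i ≤ Qmax Q :=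
  le_ciSup (Set.finite_range Q).bddAbove i

lemma Qmax_eq {K : ℕ} {Q : Fin K → ℝ} {i : Fin K} (h : isMax Q i) : Qmax Q = Q i :=
  have : Nonempty (Fin K) := ⟨i⟩
  le_antisymm (ciSup_le h) (le_Qmax Q i)

lemma gapQ_nonneg {K : ℕ} (Q : Fin K → ℝ) (i : Fin K) : 0 ≤ gapQ Q i :=
  sub_nonneg.2 (le_Qmax Q i)

lemma gapQ_pos {K : ℕ} {Q : Fin K → ℝ} {i : Fin K} (h : ¬ isMax Q i) : 0 < gapQ Q i := by
  unfold isMax at h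
  push Not at h
  obtain ⟨j, hj⟩ := h
  have := le_Qmax Q j
  unfold gapQ
  linarith

lemma Dbase_pos {K : ℕ} {Q : Fin K → ℝ} {i : Fin K} (hK : 2 ≤ K) (h : ¬ isMax Q i) :
    0 < Dbase Q i := by
  have hi := gapQ_pos h
  have : Nontrivial (Fin K) := Fin.nontrivial_iff_two_le.2 hK
  obtain ⟨j, hj⟩ := exists_ne i
  unfold Dbase
  refine mul_pos (by positivity) (sum_pos (fun j _ => ?_) ⟨j, by simp [hj]⟩)
  have := gapQ_nonneg Q j
  positivity

/-- A termwise comparison of `Dbase Q i` with `4 x² ∑_j (q_j + s)⁻²`. -/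
lemma Dbase_le_aux {K : ℕ} {Q : Fin K → ℝ} {i : Fin K} (h : ¬ isMax Q i) {s x : ℝ}
    (hs : 0 < s)
    (hle : ∀ j, gapQ Q i * (gapQ Q j + s) ≤ x * (gapQ Q j + gapQ Q i)) :
    Dbase Q i ≤ 4 * x ^ 2 * ∑ j, ((gapQ Q j + s) ^ 2)⁻¹ := by
  have hi := gapQ_pos h
  unfold Dbase
  rw [mul_sum, mul_sum]
  refine (sum_le_sum_of_subset_of_nonneg (erase_subset i univ)
    (fun j _ _ => by positivity)).trans (sum_le_sum fun j _ => ?_)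
  have hj := gapQ_nonneg Q j
  have h1 : 0 < gapQ Q j + gapQ Q i := by linarith
  have h2 : 0 < gapQ Q j + s := by linarith
  rw [← div_eq_mul_inv, ← div_eq_mul_inv, div_le_div_iff₀ (by positivity) (by positivity)]
  have h3 := pow_le_pow_left₀ (mul_nonneg hi.le h2.le) (hle j) 2
  rw [mul_pow, mul_pow] at h3
  nlinarith [h3]

lemma Dbase_le {K : ℕ} {Q : Fin K → ℝ} {i : Fin K} (h : ¬ isMax Q i) {s : ℝ} (hs : 0 < s) :
    Dbase Q i ≤ 4 * (gapQ Q i + s) ^ 2 * ∑ j, ((gapQ Q j + s) ^ 2)⁻¹ := by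
  have hi := gapQ_pos h
  refine Dbase_le_aux h hs fun j => ?_
  have hj := gapQ_nonneg Q j
  nlinarith [mul_nonneg hs.le hj, mul_pos hi hi]

lemma Dbase_le_of_gapQ_le {K : ℕ} {Q : Fin K → ℝ} {i : Fin K} (h : ¬ isMax Q i) {s : ℝ}
    (hs : gapQ Q i ≤ s) :
    Dbase Q i ≤ 4 * s ^ 2 * ∑ j, ((gapQ Q j + s) ^ 2)⁻¹ := by
  have hi := gapQ_pos h
  refine Dbase_le_aux h (hi.trans_le hs) fun j => ?_
  have hj := gapQ_nonneg Q j
  nlinarith [mul_le_mul_of_nonneg_right hs hj]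

/-- The infimum defining `Dfun` at a maximizer is attained at a non-maximizer, and it is therefore
at most the value at any given non-maximizer `a`. -/
lemma exists_Dfun_eq_Dbase {K : ℕ} {Q : Fin K → ℝ} {a i : Fin K} (ha : ¬ isMax Q a)
    (hi : isMax Q i) : ∃ i', ¬ isMax Q i' ∧ Dfun Q i = Dbase Q i' ∧ Dfun Q i ≤ Dbase Q a := by
  have hfin : {x : ℝ | ∃ i', ¬ isMax Q i' ∧ x = Dbase Q i'}.Finite := by
    refine (Set.finite_range (Dbase Q)).subset ?_
    rintro x ⟨i', -, rfl⟩
    exact ⟨i', rfl⟩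
  have hne : {x : ℝ | ∃ i', ¬ isMax Q i' ∧ x = Dbase Q i'}.Nonempty := ⟨_, a, ha, rfl⟩
  obtain ⟨i', h1, h2⟩ := hne.csInf_mem hfin
  refine ⟨i', h1, by rw [Dfun, if_pos hi, h2], ?_⟩
  rw [Dfun, if_pos hi]
  exact csInf_le hfin.bddBelow ⟨a, ha, rfl⟩

lemma H1_eq {K : ℕ} {P : Fin K → ℝ} {a : Fin K} (h : uniqueMax P a) :
    H1 P = ∑ j ∈ univ.erase a, ((P a - P j) ^ 2)⁻¹ := by
  unfold H1
  rw [Qmax_eq h.1]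
  refine sum_congr ?_ fun _ _ => rfl
  ext j
  simp only [mem_filter, mem_univ, true_and, mem_erase, and_true]
  exact ⟨fun hj e => hj (e ▸ h.1), fun hj e => hj (h.2 j e)⟩

/-- Lemma G.1 (Stability). -/
theorem stability_lemma :
    ∃ C : ℝ, 0 < C ∧
      ∀ (K : ℕ), 2 ≤ K →
        ∀ (P Q : Fin K → ℝ) (istar : Fin K),
          uniqueMax P istar → ¬ isMax Q istar →
          C ≤ Sfun Q P := by
  refine ⟨1 / 96, by norm_num, fun K hK P Q a hP ha => ?_⟩
  have : Nonempty (Fin K) := ⟨a⟩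
  obtain ⟨b, hb⟩ : ∃ b, isMax Q b := Finite.exists_max Q
  have hab : a ≠ b := fun e => ha (e ▸ hb)
  have hqa := gapQ_pos ha
  have hqb : gapQ Q b = 0 := by rw [gapQ, Qmax_eq hb, sub_self]
  obtain ⟨s, hs⟩ : ∃ s, s = max (P a - Qmax Q) (gapQ Q a) := ⟨_, rfl⟩
  have hsa : gapQ Q a ≤ s := hs ▸ le_max_right _ _
  have hst : P a - Qmax Q ≤ s := hs ▸ le_max_left _ _
  have hs0 : 0 < s := hqa.trans_le hsa
  obtain ⟨w, hw⟩ : ∃ w : Fin K → ℝ, w = fun j => ((gapQ Q j + s) ^ 2)⁻¹ := ⟨_, rfl⟩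
  have hr : ∀ j, 0 < gapQ Q j + s := fun j => by linarith [gapQ_nonneg Q j]
  have hw0 : ∀ j, 0 < w j := fun j => by
    have := hr j
    rw [hw]
    positivity
  have hwr : ∀ j, w j * (gapQ Q j + s) ^ 2 = 1 := fun j => by
    rw [hw]
    exact inv_mul_cancel₀ (pow_ne_zero 2 (hr j).ne')
  obtain ⟨H, hH⟩ : ∃ H, H = ∑ j, w j := ⟨_, rfl⟩
  have hwH : ∀ j, w j ≤ H := fun j => by
    rw [hH]
    exact single_le_sum (fun j _ => (hw0 j).le) (mem_univ j)
  have hH0 : 0 < H := (hw0 a).trans_le (hwH a)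
  have hDa : Dbase Q a ≤ 4 * s ^ 2 * H := by
    rw [hH, hw]
    exact Dbase_le_of_gapQ_le ha hsa
  have hDpos : ∀ i, 0 < Dfun Q i := fun i => by
    by_cases hi : isMax Q i
    · obtain ⟨i', h1, h2, -⟩ := exists_Dfun_eq_Dbase ha hi
      exact h2 ▸ Dbase_pos hK h1
    · rw [Dfun, if_neg hi]
      exact Dbase_pos hK hi
  have hDb : Dfun Q b ≤ 4 * s ^ 2 * H := by
    obtain ⟨-, -, -, h⟩ := exists_Dfun_eq_Dbase ha hb
    exact h.trans hDa
  have hDa' : Dfun Q a ≤ 4 * s ^ 2 * H := by rwa [Dfun, if_neg ha]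
  have hD : ∀ i, Dfun Q i ≤ 4 * (gapQ Q i + s) ^ 2 * H := fun i => by
    by_cases hi : isMax Q i
    · obtain ⟨-, -, -, h⟩ := exists_Dfun_eq_Dbase ha hi
      have h0 : gapQ Q i = 0 := by rw [gapQ, Qmax_eq hi, sub_self]
      rw [h0, zero_add]
      exact h.trans hDa
    · rw [Dfun, if_neg hi, hH, hw]
      exact Dbase_le hi hs0
  obtain ⟨T, hT⟩ : ∃ T, T = ∑ i, (Q i - P i) ^ 2 / Dfun Q i := ⟨_, rfl⟩
  have hterm : ∀ i, 0 ≤ (Q i - P i) ^ 2 / Dfun Q i := fun i =>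
    div_nonneg (sq_nonneg _) (hDpos i).le
  have hbase : 1 ≤ 8 * H * T := by
    have h1 : (Q a - P a) ^ 2 / Dfun Q a + (Q b - P b) ^ 2 / Dfun Q b ≤ T := by
      rw [hT, ← sum_pair hab (f := fun i => (Q i - P i) ^ 2 / Dfun Q i)]
      exact sum_le_sum_of_subset_of_nonneg (subset_univ _) fun i _ _ => hterm i
    have h2 : (Q a - P a) ^ 2 / (4 * s ^ 2 * H) ≤ (Q a - P a) ^ 2 / Dfun Q a :=
      div_le_div_of_nonneg_left (sq_nonneg _) (hDpos a) hDa'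
    have h3 : (Q b - P b) ^ 2 / (4 * s ^ 2 * H) ≤ (Q b - P b) ^ 2 / Dfun Q b :=
      div_le_div_of_nonneg_left (sq_nonneg _) (hDpos b) hDb
    have h4 : s ^ 2 / 2 ≤ (Q a - P a) ^ 2 + (Q b - P b) ^ 2 := by
      have hPab := hP.1 b
      have hQb := Qmax_eq hb
      have hga : gapQ Q a = Qmax Q - Q a := rfl
      rcases le_total (P a - Qmax Q) (gapQ Q a) with hc | hc
      · -- here `s = q_a ≤ e_a - e_b`
        rw [max_eq_right hc] at hs
        have h5 : s ≤ (P a - Q a) - (P b - Q b) := by linarith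
        nlinarith [sq_nonneg ((P a - Q a) + (P b - Q b)), pow_le_pow_left₀ hs0.le h5 2]
      · -- here `s = P_a - Q* ≤ e_a`
        rw [max_eq_left hc] at hs
        have h5 : s ≤ P a - Q a := by linarith
        nlinarith [sq_nonneg (Q b - P b), pow_le_pow_left₀ hs0.le h5 2]
    have h5 : ((Q a - P a) ^ 2 + (Q b - P b) ^ 2) / (4 * s ^ 2 * H) ≤ T := by
      rw [add_div]
      linarith
    rw [div_le_iff₀ (by positivity)] at h5
    have h6 : s ^ 2 * 1 ≤ s ^ 2 * (8 * H * T) := by linarith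
    exact le_of_mul_le_mul_left h6 (by positivity)
  have hwe : ∑ i, w i * (Q i - P i) ^ 2 ≤ 4 * H * T := by
    rw [hT, mul_sum]
    refine sum_le_sum fun i _ => ?_
    rw [mul_div_assoc', le_div_iff₀ (hDpos i)]
    calc w i * (Q i - P i) ^ 2 * Dfun Q i
        ≤ w i * (Q i - P i) ^ 2 * (4 * (gapQ Q i + s) ^ 2 * H) :=
          mul_le_mul_of_nonneg_left (hD i) (mul_nonneg (hw0 i).le (sq_nonneg _))
      _ = w i * (gapQ Q i + s) ^ 2 * (4 * H * (Q i - P i) ^ 2) := by ring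
      _ = 4 * H * (Q i - P i) ^ 2 := by rw [hwr i, one_mul]
  have hδ : ∀ j ∈ univ.erase a, 0 < P a - P j := fun j hj => by
    refine sub_pos.2 (lt_of_le_of_ne (hP.1 j) fun e => (mem_erase.1 hj).1 (hP.2 j fun k => ?_))
    rw [e]
    exact hP.1 k
  have hsum : ∑ j ∈ univ.erase a, (w j * (P a - P j)) ^ 2 ≤ 24 * H ^ 2 * T := by
    have h1 : ∑ j ∈ univ.erase a, (w j * (P a - P j)) ^ 2
        ≤ ∑ j, (2 * w j + 2 * H * (w j * (Q j - P j) ^ 2)) := by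
      refine le_trans (sum_le_sum fun j hj => ?_)
        (sum_le_sum_of_subset_of_nonneg (erase_subset a univ) fun j _ _ => ?_)
      · have hj0 := hδ j hj
        have hg : gapQ Q j = Qmax Q - Q j := rfl
        have h2 : P a - P j ≤ (gapQ Q j + s) + (Q j - P j) := by linarith
        have h3 : (P a - P j) ^ 2 ≤ 2 * (gapQ Q j + s) ^ 2 + 2 * (Q j - P j) ^ 2 := by
          nlinarith [pow_le_pow_left₀ hj0.le h2 2, sq_nonneg ((gapQ Q j + s) - (Q j - P j))]
        calc (w j * (P a - P j)) ^ 2 = w j ^ 2 * (P a - P j) ^ 2 := by ring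
          _ ≤ w j ^ 2 * (2 * (gapQ Q j + s) ^ 2 + 2 * (Q j - P j) ^ 2) :=
            mul_le_mul_of_nonneg_left h3 (sq_nonneg _)
          _ = 2 * w j * (w j * (gapQ Q j + s) ^ 2) + 2 * w j * (w j * (Q j - P j) ^ 2) := by ring
          _ ≤ 2 * w j + 2 * H * (w j * (Q j - P j) ^ 2) := by
            rw [hwr j, mul_one]
            have h4 := mul_le_mul_of_nonneg_right (hwH j)
              (mul_nonneg (hw0 j).le (sq_nonneg (Q j - P j)))
            linarith
      · have := hw0 j
        positivity
    rw [sum_add_distrib, ← mul_sum, ← mul_sum, ← hH] at h1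
    have h2 := mul_le_mul_of_nonneg_left hwe hH0.le
    have h3 := mul_le_mul_of_nonneg_left hbase hH0.le
    linarith
  have hhalf : H / 2 ≤ ∑ j ∈ univ.erase a, w j := by
    have h1 : w a ≤ w b := by
      rw [hw]
      refine inv_anti₀ (pow_pos (hr b) 2) (pow_le_pow_left₀ (hr b).le ?_ 2)
      linarith
    have h2 : w b ≤ ∑ j ∈ univ.erase a, w j :=
      single_le_sum (fun j _ => (hw0 j).le) (by simp [hab.symm])
    have h3 := add_sum_erase univ w (mem_univ a)
    linarith
  have hCS := sum_mul_sq_le_sq_mul_sq (univ.erase a)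
    (fun j => w j * (P a - P j)) (fun j => (P a - P j)⁻¹)
  have hl : ∑ j ∈ univ.erase a, w j * (P a - P j) * (P a - P j)⁻¹ = ∑ j ∈ univ.erase a, w j :=
    sum_congr rfl fun j hj => by rw [mul_assoc, mul_inv_cancel₀ (hδ j hj).ne', mul_one]
  have hH1 : ∑ j ∈ univ.erase a, ((P a - P j)⁻¹) ^ 2 = H1 P := by
    rw [H1_eq hP]
    exact sum_congr rfl fun j _ => inv_pow _ _
  have hH1n : 0 ≤ H1 P := hH1 ▸ sum_nonneg fun j _ => sq_nonneg _
  simp only [hl, hH1] at hCS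
  have hfin := mul_le_mul_of_nonneg_right hsum hH1n
  have hsq := pow_le_pow_left₀ (by positivity) hhalf 2
  have hS : Sfun Q P = H1 P * T := by rw [Sfun, hT]
  rw [hS]
  have h6 : H ^ 2 * (1 / 96) ≤ H ^ 2 * (H1 P * T) := by linarith
  exact le_of_mul_le_mul_left h6 (by positivity)
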